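/- arXiv:2209.04058 — 4 statements merged into one kernel-verified Lean document; each statement's English description precedes it below -/
import Mathlib

section
/- Consider the mechanism SimpleScaledGreedy run on an instance p and a predicted instance p̂ with predicted schedule x̂. If p̂ = p, then for every machine i and every job j with j ∈ M_i \ M̂_i, the scalar satisfies r(i,j) = n. -/
open scoped Classical
noncomputable section
variable {n m : ℕ}

/-- The makespan of allocation `a` under instance `p`. -/
def MS [NeZero n] (p : Fin n → Fin m → ℝ) (a : Fin m → Fin n) : ℝ :=
  Finset.univ.sup' Finset.univ_nonempty fun i => ∑ j, if a j = i then p i j else 0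

/-- The optimal makespan of instance `p`. -/
def OPT [NeZero n] (p : Fin n → Fin m → ℝ) : ℝ :=
  Finset.univ.inf' Finset.univ_nonempty fun a : Fin m → Fin n => MS p a

/-- The scalars used by `SimpleScaledGreedy`. -/
def ssgR (phat : Fin n → Fin m → ℝ) (xhat : Fin m → Fin n) (i : Fin n) (j : Fin m) : ℝ :=
  max 1 (min (phat (xhat j) j / phat i j) (n : ℝ))

lemma exists_argmin [NeZero n] (v : Fin n → ℝ) :
    (Finset.univ.filter fun i => ∀ i', v i ≤ v i').Nonempty := by
  obtain ⟨i, -, hi⟩ := Finset.exists_min_image Finset.univ v Finset.univ_nonempty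
  exact ⟨i, by
    simp only [Finset.mem_filter, Finset.mem_univ, true_and]
    exact fun i' => hi i' (Finset.mem_univ i')⟩

/-- The allocation computed by `SimpleScaledGreedy`: job `j` goes to a machine minimizing
`r(i,j)·p(i,j)`, with ties broken in favor of the predicted machine `x̂ j` and otherwise
in favor of the smallest-index machine. -/
def ssgAssign [NeZero n] (p phat : Fin n → Fin m → ℝ) (xhat : Fin m → Fin n) (j : Fin m) :
    Fin n :=
  let v : Fin n → ℝ := fun i => ssgR phat xhat i j * p i j
  if ∀ i, v (xhat j) ≤ v i then xhat j
  else (Finset.univ.filter fun i => ∀ i', v i ≤ v i').min' (exists_argmin v)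

/-!
A job leaves its predicted machine `x̂ j` only for a machine `i` with `r(i,j) p(i,j) < p(x̂ j,j)`,
since `r(x̂ j,j) = 1` and ties favour `x̂ j`. Unless `r(i,j)` is capped at `n`, it is at least
`p̂(x̂ j,j) / p̂(i,j)`; if this ratio is no smaller than the true one, then
`r(i,j) p(i,j) ≥ p(x̂ j,j)`, a contradiction.
-/

lemma ssgR_predicted [NeZero n] {phat : Fin n → Fin m → ℝ} {xhat : Fin m → Fin n} {j : Fin m}
    (hphat : phat (xhat j) j ≠ 0) : ssgR phat xhat (xhat j) j = 1 := by
  have one_le_n : (1 : ℝ) ≤ n := Nat.one_le_cast.mpr NeZero.one_le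
  rw [ssgR, div_self hphat, min_eq_left one_le_n, max_self]

lemma div_le_ssgR_of_ssgR_ne [NeZero n] {phat : Fin n → Fin m → ℝ} {xhat : Fin m → Fin n}
    {i : Fin n} {j : Fin m} (hne : ssgR phat xhat i j ≠ n) :
    phat (xhat j) j / phat i j ≤ ssgR phat xhat i j := by
  have one_le_n : (1 : ℝ) ≤ n := Nat.one_le_cast.mpr NeZero.one_le
  have ratio_le_n : phat (xhat j) j / phat i j ≤ n := by
    by_contra! n_lt_ratio
    exact hne (by rw [ssgR, min_eq_right n_lt_ratio.le, max_eq_right one_le_n])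
  rw [ssgR, min_eq_left ratio_le_n]
  exact le_max_right _ _

section Assign

variable [NeZero n] (p phat : Fin n → Fin m → ℝ) (xhat : Fin m → Fin n) (j : Fin m)

lemma ssgR_mul_ssgAssign_le (i : Fin n) :
    ssgR phat xhat (ssgAssign p phat xhat j) j * p (ssgAssign p phat xhat j) j ≤
      ssgR phat xhat i j * p i j := by
  by_cases hmin : ∀ i, ssgR phat xhat (xhat j) j * p (xhat j) j ≤ ssgR phat xhat i j * p i j
  · rw [ssgAssign, if_pos hmin]
    exact hmin i
  · rw [ssgAssign, if_neg hmin]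
    have argmin_mem :=
      Finset.min'_mem _ (exists_argmin fun i => ssgR phat xhat i j * p i j)
    exact (Finset.mem_filter.mp argmin_mem).2 i

variable {p phat xhat j}

lemma ssgR_mul_ssgAssign_lt_predicted (hne : ssgAssign p phat xhat j ≠ xhat j) :
    ssgR phat xhat (ssgAssign p phat xhat j) j * p (ssgAssign p phat xhat j) j <
      ssgR phat xhat (xhat j) j * p (xhat j) j := by
  by_contra! predicted_le
  exact hne (if_pos fun i => predicted_le.trans (ssgR_mul_ssgAssign_le p phat xhat j i))

end Assign

theorem ssg_scalar_eq_n_general [NeZero n]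
    {p phat : Fin n → Fin m → ℝ} {xhat : Fin m → Fin n} {i : Fin n} {j : Fin m}
    (hp : 0 ≤ p i j) (hphat : ∀ i, 0 < phat i j)
    (hratio : p (xhat j) j * phat i j ≤ phat (xhat j) j * p i j)
    (hMi : ssgAssign p phat xhat j = i) (hMhat : xhat j ≠ i) :
    ssgR phat xhat i j = n := by
  subst hMi
  set i := ssgAssign p phat xhat j
  have scaled_lt : ssgR phat xhat i j * p i j < p (xhat j) j := by
    simpa only [ssgR_predicted (hphat _).ne', one_mul]
      using ssgR_mul_ssgAssign_lt_predicted hMhat.symm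
  by_contra hne
  have le_scaled : p (xhat j) j ≤ ssgR phat xhat i j * p i j :=
    calc p (xhat j) j
      _ ≤ phat (xhat j) j * p i j / phat i j := (le_div_iff₀ (hphat i)).mpr hratio
      _ = phat (xhat j) j / phat i j * p i j := (div_mul_eq_mul_div _ _ _).symm
      _ ≤ ssgR phat xhat i j * p i j :=
        mul_le_mul_of_nonneg_right (div_le_ssgR_of_ssgR_ne hne) hp
  exact scaled_lt.not_ge le_scaled

/-- If `SimpleScaledGreedy` is run with an accurate prediction `p̂ = p`, then
every job `j ∈ M_i \ M̂_i` has scalar `r(i,j) = n`. -/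
theorem ssg_scalar_eq_n [NeZero n]
    (p phat : Fin n → Fin m → ℝ) (xhat : Fin m → Fin n)
    (hp : ∀ i j, 0 < p i j) (hphat : ∀ i j, 0 < phat i j)
    (hpred : phat = p) (i : Fin n) (j : Fin m)
    (hMi : ssgAssign p phat xhat j = i) (hMhat : xhat j ≠ i) :
    ssgR phat xhat i j = n := by
  subst hpred
  exact ssg_scalar_eq_n_general (hp i j).le (hphat · j) le_rfl hMi hMhat
end
end

section
/- The n²-robustness of SimpleScaledGreedy is asymptotically tight: for every n ≥ 2 and every ε > 0, there exist an instance p, a predicted instance p̂ (on n machines and 2n−2 jobs, with nonnegative processing times), and a predicted schedule x̂ that is optimal for p̂, such that the allocation x output by SimpleScaledGreedy satisfies MS(p, x) ≥ n(n−1) while OPT(p) ≤ 1 + ε; hence MS(p,x) ≥ (n(n−1)/(1+ε))·OPT(p). -/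
open scoped Classical
noncomputable section
variable {n m : ℕ}

/-!
Take `n = k + 1` machines, `k` trap jobs and `k` filler jobs. A trap job takes time `n` on machine
`0` and `1` on every other machine, while it is predicted to take `1` on machine `0` and `1 / n`
elsewhere. The fillers actually take no time, but are predicted to take `k` on every machine. Hence
no schedule for the prediction beats `k`, and `k` is attained by sending all trap jobs to machine
`0` and one filler to each other machine. The predicted speed-up `n` makes the scaled processing
time of a trap job equal to `n` on every machine, so the tie is broken in favor of machine `0`,
whose load becomes `k * n`. Spreading the trap jobs over the other machines gives makespan `1`.
-/

/-- The load of machine `i` under allocation `a`: the total processing time of its jobs. The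
makespan `MS` is the maximum load. -/
def machineLoad (p : Fin n → Fin m → ℝ) (a : Fin m → Fin n) (i : Fin n) : ℝ :=
  ∑ j, if a j = i then p i j else 0

section Makespan

variable [NeZero n] {p phat : Fin n → Fin m → ℝ} {a xhat : Fin m → Fin n} {j : Fin m} {c : ℝ}

lemma MS_le_iff : MS p a ≤ c ↔ ∀ i, machineLoad p a i ≤ c := by
  simp [MS, machineLoad]

lemma machineLoad_le_MS (p : Fin n → Fin m → ℝ) (a : Fin m → Fin n) (i : Fin n) :
    machineLoad p a i ≤ MS p a :=
  MS_le_iff.1 le_rfl i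

lemma OPT_le_MS (p : Fin n → Fin m → ℝ) (a : Fin m → Fin n) : OPT p ≤ MS p a :=
  Finset.inf'_le _ (Finset.mem_univ a)

lemma apply_le_MS (hp : ∀ i j, 0 ≤ p i j) (a : Fin m → Fin n) (j : Fin m) :
    p (a j) j ≤ MS p a :=
  calc
    p (a j) j = if a j = a j then p (a j) j else 0 := (if_pos rfl).symm
    _ ≤ machineLoad p a (a j) :=
      Finset.single_le_sum (f := fun j' => if a j' = a j then p (a j) j' else 0)
        (fun j' _ => ite_nonneg (hp _ j') le_rfl) (Finset.mem_univ j)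
    _ ≤ MS p a := machineLoad_le_MS p a (a j)

lemma le_OPT_of_forall_le (hp : ∀ i j, 0 ≤ p i j) (hc : ∀ i, c ≤ p i j) : c ≤ OPT p :=
  Finset.le_inf' _ _ fun a _ => (hc (a j)).trans (apply_le_MS hp a j)

lemma ssgAssign_eq_of_forall_le
    (h : ∀ i, ssgR phat xhat (xhat j) j * p (xhat j) j ≤ ssgR phat xhat i j * p i j) :
    ssgAssign p phat xhat j = xhat j :=
  if_pos h

end Makespan

/-- The true processing times of the tight example: trap job `Fin.castAdd k j` takes time `k + 1`
on machine `0` and `1` elsewhere, filler job `Fin.natAdd k j` takes no time. -/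
def tightInstance (k : ℕ) (i : Fin (k + 1)) : Fin (k + k) → ℝ :=
  Fin.append (fun _ => if i = 0 then k + 1 else 1) (fun _ => 0)

/-- The predicted processing times of the tight example: a trap job takes time `1` on machine `0`
and `1 / (k + 1)` elsewhere, a filler job takes time `k` on every machine. -/
def tightPrediction (k : ℕ) (i : Fin (k + 1)) : Fin (k + k) → ℝ :=
  Fin.append (fun _ => if i = 0 then 1 else 1 / (k + 1)) (fun _ => k)

/-- The predicted schedule of the tight example: all trap jobs go to machine `0` and each other
machine receives one filler job. -/
def tightSchedule (k : ℕ) : Fin (k + k) → Fin (k + 1) :=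
  Fin.append (fun _ => 0) Fin.succ

/-- A schedule of makespan at most `1` for the tight instance: each machine other than `0` receives
one trap job, and the filler jobs go to machine `0`. -/
def spreadSchedule (k : ℕ) : Fin (k + k) → Fin (k + 1) :=
  Fin.append Fin.succ (fun _ => 0)

section TightExample

variable {k : ℕ}

lemma tightInstance_nonneg (i : Fin (k + 1)) (j : Fin (k + k)) : 0 ≤ tightInstance k i j := by
  refine Fin.addCases (fun trap => ?_) (fun filler => ?_) j
  · simp only [tightInstance, Fin.append_left]
    split_ifs <;> positivity
  · simp only [tightInstance, Fin.append_right, le_refl]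

lemma tightPrediction_nonneg (i : Fin (k + 1)) (j : Fin (k + k)) :
    0 ≤ tightPrediction k i j := by
  refine Fin.addCases (fun trap => ?_) (fun filler => ?_) j
  · simp only [tightPrediction, Fin.append_left]
    split_ifs <;> positivity
  · simp only [tightPrediction, Fin.append_right, Nat.cast_nonneg]

lemma machineLoad_tightSchedule (i : Fin (k + 1)) :
    machineLoad (tightPrediction k) (tightSchedule k) i = k := by
  simp only [machineLoad, tightPrediction, tightSchedule, Fin.sum_univ_add, Fin.append_left,
    Fin.append_right]
  cases i using Fin.cases <;> simp [(Fin.succ_ne_zero _).symm]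

lemma le_OPT_tightPrediction (hk : 0 < k) : (k : ℝ) ≤ OPT (tightPrediction k) :=
  le_OPT_of_forall_le (j := Fin.natAdd k ⟨0, hk⟩) tightPrediction_nonneg fun i => by
    rw [tightPrediction, Fin.append_right]

lemma MS_tightSchedule_eq_OPT (hk : 0 < k) :
    MS (tightPrediction k) (tightSchedule k) = OPT (tightPrediction k) :=
  le_antisymm
    ((MS_le_iff.2 fun i => (machineLoad_tightSchedule i).le).trans (le_OPT_tightPrediction hk))
    (OPT_le_MS _ _)

lemma ssgR_mul_tightInstance_castAdd (i : Fin (k + 1)) (j : Fin k) :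
    ssgR (tightPrediction k) (tightSchedule k) i (Fin.castAdd k j) *
      tightInstance k i (Fin.castAdd k j) = k + 1 := by
  by_cases hi : i = 0 <;> simp [ssgR, tightPrediction, tightSchedule, tightInstance, hi]

lemma ssgAssign_tightInstance_castAdd (j : Fin k) :
    ssgAssign (tightInstance k) (tightPrediction k) (tightSchedule k) (Fin.castAdd k j) = 0 :=
  calc
    _ = tightSchedule k (Fin.castAdd k j) := ssgAssign_eq_of_forall_le fun i => by
      simp only [ssgR_mul_tightInstance_castAdd, le_refl]
    _ = 0 := Fin.append_left _ _ j

lemma machineLoad_ssgAssign_tightInstance_zero :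
    machineLoad (tightInstance k)
      (ssgAssign (tightInstance k) (tightPrediction k) (tightSchedule k)) 0 = (k + 1) * k := by
  simp only [machineLoad, tightInstance, Fin.sum_univ_add, Fin.append_left, Fin.append_right]
  simp [ssgAssign_tightInstance_castAdd, add_mul]

lemma machineLoad_spreadSchedule_le_one (i : Fin (k + 1)) :
    machineLoad (tightInstance k) (spreadSchedule k) i ≤ 1 := by
  simp only [machineLoad, tightInstance, spreadSchedule, Fin.sum_univ_add, Fin.append_left,
    Fin.append_right]
  cases i using Fin.cases <;> simp

lemma OPT_tightInstance_le_one : OPT (tightInstance k) ≤ 1 :=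
  (OPT_le_MS _ _).trans (MS_le_iff.2 machineLoad_spreadSchedule_le_one)

end TightExample

/-- The `n²`-robustness of `SimpleScaledGreedy` is asymptotically tight:
for every `n ≥ 2` and `ε > 0` there are an instance `p` and a prediction `p̂` on `n` machines
and `2n−2` jobs (with nonnegative processing times) together with an optimal predicted
schedule `x̂` for `p̂`, such that the output of `SimpleScaledGreedy` has makespan at least
`n(n−1)` while `OPT(p) ≤ 1+ε`; hence `MS(p,x) ≥ (n(n−1)/(1+ε))·OPT(p)`. -/
theorem ssg_robustness_tight (n : ℕ) [NeZero n] (hn : 2 ≤ n) (ε : ℝ) (hε : 0 < ε) :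
    ∃ (p phat : Fin n → Fin (2 * n - 2) → ℝ) (xhat : Fin (2 * n - 2) → Fin n),
      (∀ i j, 0 ≤ p i j) ∧ (∀ i j, 0 ≤ phat i j) ∧
      MS phat xhat = OPT phat ∧
      (n : ℝ) * ((n : ℝ) - 1) ≤ MS p (ssgAssign p phat xhat) ∧
      OPT p ≤ 1 + ε ∧
      ((n : ℝ) * ((n : ℝ) - 1) / (1 + ε)) * OPT p ≤ MS p (ssgAssign p phat xhat) := by
  obtain ⟨k, rfl⟩ : ∃ k, n = k + 1 := ⟨n - 1, by omega⟩
  have hk : 0 < k := by omega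
  rw [show 2 * (k + 1) - 2 = k + k by omega, Nat.cast_succ, add_sub_cancel_right]
  have hMS : ((k : ℝ) + 1) * k ≤
      MS (tightInstance k) (ssgAssign (tightInstance k) (tightPrediction k) (tightSchedule k)) :=
    machineLoad_ssgAssign_tightInstance_zero.symm.trans_le (machineLoad_le_MS _ _ 0)
  have hOPT : OPT (tightInstance k) ≤ 1 + ε := OPT_tightInstance_le_one.trans (by linarith)
  refine ⟨tightInstance k, tightPrediction k, tightSchedule k, tightInstance_nonneg,
    tightPrediction_nonneg, MS_tightSchedule_eq_OPT hk, hMS, hOPT, ?_⟩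
  calc
    ((k : ℝ) + 1) * k / (1 + ε) * OPT (tightInstance k) ≤ (k + 1) * k / (1 + ε) * (1 + ε) := by
      gcongr
    _ = (k + 1) * k := div_mul_cancel₀ _ (by positivity)
    _ ≤ _ := hMS
end
end

section
/- Consider the mechanism ScaledGreedy run on an instance p and predicted instance p̂ with predicted schedule x̂ and parameter γ > 0. If p̂ = p, then for every machine i, the set J_i computed by ScaledGreedy at termination equals M_i \ M̂_i. -/
open scoped Classical
noncomputable section
variable {n m : ℕ}

/-- The state of the iterative loop of `ScaledGreedy`: the sets `J_i` and the scalars `r(i,j)`. -/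
structure SGState (n m : ℕ) where
  J : Fin n → Finset (Fin m)
  r : Fin n → Fin m → ℝ

/-- The set `∪_i J_i` of jobs already put aside by the loop. -/
def sgAssigned (s : SGState n m) : Finset (Fin m) :=
  Finset.univ.filter fun j => ∃ i, j ∈ s.J i

/-- The set `I` of machines whose set `J_i` is not yet full. -/
def sgI [NeZero n] (phat : Fin n → Fin m → ℝ) (xhat : Fin m → Fin n) (γ : ℝ)
    (s : SGState n m) : Finset (Fin n) :=
  Finset.univ.filter fun i => ∑ j ∈ s.J i, phat i j < γ * MS phat xhat

/-- The set `T` of candidate pairs `(i,j)`. -/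
def sgT [NeZero n] (phat : Fin n → Fin m → ℝ) (xhat : Fin m → Fin n) (γ : ℝ)
    (s : SGState n m) : Finset (Fin n × Fin m) :=
  Finset.univ.filter fun q =>
    q.2 ∉ sgAssigned s ∧ q.1 ∈ sgI phat xhat γ s ∧
    phat q.1 q.2 < phat (xhat q.2) q.2 ∧
    ∀ i' ∈ sgI phat xhat γ s, phat i' q.2 < phat (xhat q.2) q.2 → phat q.1 q.2 ≤ phat i' q.2

/-- The initial state of `ScaledGreedy`: `J_i = ∅` and `r(i,j) = max(p̂(î_j,j)/p̂(i,j), 1)`. -/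
def sgInit (phat : Fin n → Fin m → ℝ) (xhat : Fin m → Fin n) : SGState n m :=
  ⟨fun _ => ∅, fun i j => max (phat (xhat j) j / phat i j) 1⟩

/-- One iteration of the while-loop of `ScaledGreedy`: a pair `(i*,j*) ∈ T` maximizing
`p̂(î_j,j)/p̂(i,j)` is selected, `j*` is added to `J_{i*}`, and `r(i,j*)` is set to `1` for
every machine `i` with `p̂(i*,j*) ≤ p̂(i,j*)`. -/
def SGStep [NeZero n] (phat : Fin n → Fin m → ℝ) (xhat : Fin m → Fin n) (γ : ℝ)
    (s s' : SGState n m) : Prop :=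
  ∃ q ∈ sgT phat xhat γ s,
    (∀ q' ∈ sgT phat xhat γ s,
      phat (xhat q'.2) q'.2 / phat q'.1 q'.2 ≤ phat (xhat q.2) q.2 / phat q.1 q.2) ∧
    s'.J = (fun i => if i = q.1 then insert q.2 (s.J i) else s.J i) ∧
    s'.r = fun i j => if j = q.2 ∧ phat q.1 q.2 ≤ phat i q.2 then 1 else s.r i j

/-- `s` is the state of `ScaledGreedy` at termination: it is reachable from the initial state
by iterations of the loop, and `T = ∅` so the loop has terminated. -/
def SGFinal [NeZero n] (phat : Fin n → Fin m → ℝ) (xhat : Fin m → Fin n) (γ : ℝ)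
    (s : SGState n m) : Prop :=
  Relation.ReflTransGen (SGStep phat xhat γ) (sgInit phat xhat) s ∧ sgT phat xhat γ s = ∅

/-- The allocation computed by `ScaledGreedy` from the terminal state `s`: each job `j` goes to
a machine minimizing `r(i,j)·p(i,j)`, with ties broken in favor of `î_j` first, then the machine
`i'` with `j ∈ J_{i'}` (if any), then the smallest-index machine. -/
def sgAssign [NeZero n] (s : SGState n m) (xhat : Fin m → Fin n)
    (p : Fin n → Fin m → ℝ) (j : Fin m) : Fin n :=
  let v : Fin n → ℝ := fun i => s.r i j * p i j
  if ∀ i, v (xhat j) ≤ v i then xhat j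
  else if h : ∃ i', j ∈ s.J i' ∧ ∀ i, v i' ≤ v i then Classical.choose h
  else (Finset.univ.filter fun i => ∀ i', v i ≤ v i').min' (exists_argmin v)

/-- `max_j r(i,j)`, the largest scalar of machine `i`. -/
def maxScalar [NeZero m] (r : Fin n → Fin m → ℝ) (i : Fin n) : ℝ :=
  Finset.univ.sup' Finset.univ_nonempty fun j => r i j

/-!
Up to each point of the run, a job `j` has either never been selected, and still has its initial
scalars, or it has been selected exactly once, by a machine `k` strictly faster on `j` than `î_j`.
When `p̂ = p`, the initial scaled cost of `j` on `i` is `max (p(î_j,j)) (p(i,j))`, so `î_j` is a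
minimizer for an unselected job and wins the tie. Selection by `k` resets the scalars of all
machines at least as slow as `k`, in particular those of `k` and `î_j`, while the faster machines
keep a scaled cost of at least `p(î_j,j) > p(k,j)`. Hence `k` is then a minimizer, `î_j` is not,
and the second tie-breaking rule picks `k`.
-/

namespace SGState

/-- The loop has not yet selected job `j`: it lies in no `J_i` and its scalars are the initial
ones, which are read off the state `sgInit`. -/
structure IsUnselected (phat : Fin n → Fin m → ℝ) (xhat : Fin m → Fin n) (s : SGState n m)
    (j : Fin m) : Prop where
  notMem_J (i : Fin n) : j ∉ s.J i
  r_eq (i : Fin n) : s.r i j = (sgInit phat xhat).r i j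

/-- The loop has selected job `j` for machine `k`: it lies in `J_k` and in no other `J_i`, the
prediction of `k` for `j` beats that of `î_j`, and exactly the machines at least as slow on `j`
as `k` have had their scalar reset to `1`. -/
structure IsSelectedBy (phat : Fin n → Fin m → ℝ) (xhat : Fin m → Fin n) (s : SGState n m)
    (j : Fin m) (k : Fin n) : Prop where
  mem_J_iff (i : Fin n) : j ∈ s.J i ↔ i = k
  lt_xhat : phat k j < phat (xhat j) j
  r_eq (i : Fin n) : s.r i j = if phat k j ≤ phat i j then 1 else (sgInit phat xhat).r i j

end SGState

section Loop

variable [NeZero n] {phat : Fin n → Fin m → ℝ} {xhat : Fin m → Fin n} {γ : ℝ} {s s' : SGState n m}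

theorem SGStep.exists_selected (hstep : SGStep phat xhat γ s s') :
    ∃ k l, (∀ i, l ∉ s.J i) ∧ phat k l < phat (xhat l) l ∧
      (∀ i j, j ∈ s'.J i ↔ (i = k ∧ j = l) ∨ j ∈ s.J i) ∧
      ∀ i j, s'.r i j = if j = l ∧ phat k l ≤ phat i l then 1 else s.r i j := by
  obtain ⟨⟨k, l⟩, hkl, -, hJ, hr⟩ := hstep
  simp only [sgT, sgAssigned, Finset.mem_filter, Finset.mem_univ, true_and, not_exists] at hkl
  obtain ⟨hfree, -, hlt, -⟩ := hkl
  refine ⟨k, l, hfree, hlt, fun i j => ?_, fun i j => congrFun₂ hr i j⟩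
  rw [hJ]
  by_cases hi : i = k <;> simp [hi]

theorem SGState.isUnselected_or_exists_isSelectedBy_of_reachable
    (hs : Relation.ReflTransGen (SGStep phat xhat γ) (sgInit phat xhat) s) (j : Fin m) :
    s.IsUnselected phat xhat j ∨ ∃ k, s.IsSelectedBy phat xhat j k := by
  induction hs with
  | refl => exact .inl ⟨fun _ => Finset.notMem_empty j, fun _ => rfl⟩
  | tail _ hstep ih =>
    obtain ⟨k, l, hfree, hlt, hJ, hr⟩ := hstep.exists_selected
    by_cases hjl : j = l
    · subst hjl
      rcases ih with hun | ⟨k', hsel⟩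
      · exact .inr ⟨k, fun i => by simp [hJ, hfree], hlt, fun i => by simp [hr, hun.r_eq]⟩
      · exact absurd ((hsel.mem_J_iff k').2 rfl) (hfree k')
    · rcases ih with hun | ⟨k', hsel⟩
      · exact .inl ⟨fun i => by simp [hJ, hjl, hun.notMem_J], fun i => by simp [hr, hjl, hun.r_eq]⟩
      · exact .inr ⟨k', fun i => by simp [hJ, hjl, hsel.mem_J_iff], hsel.lt_xhat,
          fun i => by simp [hr, hjl, hsel.r_eq]⟩

end Loop

section Assign

variable [NeZero n] {s : SGState n m} {xhat : Fin m → Fin n} {p : Fin n → Fin m → ℝ} {j : Fin m}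

theorem sgAssign_eq_xhat (hmin : ∀ i, s.r (xhat j) j * p (xhat j) j ≤ s.r i j * p i j) :
    sgAssign s xhat p j = xhat j :=
  if_pos hmin

theorem sgAssign_eq_of_mem_J_iff {k : Fin n} (hJ : ∀ i, j ∈ s.J i ↔ i = k)
    (hmin : ∀ i, s.r k j * p k j ≤ s.r i j * p i j)
    (hlt : s.r k j * p k j < s.r (xhat j) j * p (xhat j) j) :
    sgAssign s xhat p j = k := by
  have hxhat : ¬ ∀ i, s.r (xhat j) j * p (xhat j) j ≤ s.r i j * p i j :=
    fun h => (h k).not_gt hlt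
  have hexists : ∃ i', j ∈ s.J i' ∧ ∀ i, s.r i' j * p i' j ≤ s.r i j * p i j :=
    ⟨k, (hJ k).2 rfl, hmin⟩
  simp only [sgAssign, if_neg hxhat, dif_pos hexists]
  exact (hJ _).1 hexists.choose_spec.1

end Assign

section AccuratePrediction

variable {p : Fin n → Fin m → ℝ} {xhat : Fin m → Fin n} {s : SGState n m} {j : Fin m}

theorem sgInit_r_mul {i : Fin n} (hp : 0 < p i j) :
    (sgInit p xhat).r i j * p i j = max (p (xhat j) j) (p i j) := by
  simp only [sgInit]
  rw [max_mul_of_nonneg _ _ hp.le, div_mul_cancel₀ _ hp.ne', one_mul]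

namespace SGState

theorem IsUnselected.sgAssign_eq [NeZero n] (hun : s.IsUnselected p xhat j)
    (hp : ∀ i, 0 < p i j) : sgAssign s xhat p j = xhat j := by
  refine sgAssign_eq_xhat fun i => ?_
  rw [hun.r_eq, hun.r_eq, sgInit_r_mul (hp _), sgInit_r_mul (hp i), max_self]
  exact le_max_left _ _

theorem IsSelectedBy.r_mul_of_le {i k : Fin n} (hsel : s.IsSelectedBy p xhat j k)
    (hki : p k j ≤ p i j) : s.r i j * p i j = p i j := by
  rw [hsel.r_eq, if_pos hki, one_mul]

theorem IsSelectedBy.le_r_mul {i k : Fin n} (hsel : s.IsSelectedBy p xhat j k)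
    (hp : 0 < p i j) : p k j ≤ s.r i j * p i j := by
  by_cases hki : p k j ≤ p i j
  · rwa [hsel.r_mul_of_le hki]
  · rw [hsel.r_eq, if_neg hki, sgInit_r_mul hp]
    exact hsel.lt_xhat.le.trans (le_max_left _ _)

theorem IsSelectedBy.sgAssign_eq [NeZero n] {k : Fin n} (hsel : s.IsSelectedBy p xhat j k)
    (hp : ∀ i, 0 < p i j) : sgAssign s xhat p j = k := by
  have hk : s.r k j * p k j = p k j := hsel.r_mul_of_le le_rfl
  refine sgAssign_eq_of_mem_J_iff hsel.mem_J_iff (fun i => ?_) ?_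
  · exact hk.trans_le (hsel.le_r_mul (hp i))
  · rw [hk, hsel.r_mul_of_le hsel.lt_xhat.le]
    exact hsel.lt_xhat

theorem IsSelectedBy.xhat_ne {k : Fin n} (hsel : s.IsSelectedBy p xhat j k) : xhat j ≠ k := by
  rintro rfl
  exact hsel.lt_xhat.false

end SGState

end AccuratePrediction

theorem sg_J_eq_assigned_diff_general [NeZero n]
    (p : Fin n → Fin m → ℝ) (xhat : Fin m → Fin n) (γ : ℝ) (s : SGState n m)
    (hp : ∀ i j, 0 < p i j)
    (hs : Relation.ReflTransGen (SGStep p xhat γ) (sgInit p xhat) s) (i : Fin n) :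
    s.J i = Finset.univ.filter (fun j => sgAssign s xhat p j = i ∧ xhat j ≠ i) := by
  ext j
  simp only [Finset.mem_filter, Finset.mem_univ, true_and]
  rcases SGState.isUnselected_or_exists_isSelectedBy_of_reachable hs j with hun | ⟨k, hsel⟩
  · rw [hun.sgAssign_eq (hp · j)]
    exact iff_of_false (hun.notMem_J i) fun h => h.2 h.1
  · rw [hsel.sgAssign_eq (hp · j), hsel.mem_J_iff]
    constructor
    · rintro rfl
      exact ⟨rfl, hsel.xhat_ne⟩
    · exact fun h => h.1.symm

/-- If `ScaledGreedy` is run with an accurate prediction `p̂ = p`, then at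
termination `J_i = M_i \ M̂_i` for every machine `i`. -/
theorem sg_J_eq_assigned_diff [NeZero n]
    (p phat : Fin n → Fin m → ℝ) (xhat : Fin m → Fin n) (γ : ℝ) (s : SGState n m)
    (hp : ∀ i j, 0 < p i j) (hphat : ∀ i j, 0 < phat i j) (hγ : 0 < γ)
    (hfinal : SGFinal phat xhat γ s) (hpred : phat = p) (i : Fin n) :
    s.J i = Finset.univ.filter (fun j => sgAssign s xhat p j = i ∧ xhat j ≠ i) := by
  subst hpred
  exact sg_J_eq_assigned_diff_general phat xhat γ s hphat hfinal.1 i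
end
end

section
/- Consider the mechanism ScaledGreedy and let r and the sets J_i denote the scalars and sets at termination. For any machine i, any job j ∈ J_i, and any job j' ∉ J_i with r(i,j') > 1, it holds that p̂(î_j,j)/p̂(i,j) ≥ p̂(î_{j'},j')/p̂(i,j'). -/
open scoped Classical
noncomputable section
variable {n m : ℕ}

/-!
Two invariants drive the proof. A scalar `r(i,j)` exceeds `1` only if `p̂(i,j) < p̂(î_j,j)`. And
while machine `i` is still in `I`, a scalar `r(i,j)` exceeding `1` forces `j` to be unassigned:
machines never re-enter `I`, so when `j` was put into some `J_k`, machine `i` was available too;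
the choice of `k` as a fastest available machine then caused `r(i,j)` to be reset to `1`.

Hence, when `j` enters `J_i` and `r(i,j') > 1`, the job `j'` still has a candidate pair `(k,j')`
with `p̂(k,j') ≤ p̂(i,j')`. Its ratio is at least that of `(i,j')` and, by the greedy choice, at
most that of `(i,j)`. As no scalar ever rises above `1` again, the inequality persists.
-/

section ScaledGreedy

variable {phat : Fin n → Fin m → ℝ} {xhat : Fin m → Fin n} {γ : ℝ}
  {s s' : SGState n m} {i : Fin n} {j j' : Fin m}

lemma mem_sgAssigned : j ∈ sgAssigned s ↔ ∃ i, j ∈ s.J i := by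
  simp [sgAssigned]

variable [NeZero n]

lemma mem_sgI : i ∈ sgI phat xhat γ s ↔ ∑ j ∈ s.J i, phat i j < γ * MS phat xhat := by
  simp [sgI]

lemma mem_sgT :
    (i, j) ∈ sgT phat xhat γ s ↔
      j ∉ sgAssigned s ∧ i ∈ sgI phat xhat γ s ∧ phat i j < phat (xhat j) j ∧
        ∀ k ∈ sgI phat xhat γ s, phat k j < phat (xhat j) j → phat i j ≤ phat k j := by
  simp [sgT]

lemma exists_mem_sgT_le (hj : j ∉ sgAssigned s) (hi : i ∈ sgI phat xhat γ s)
    (hlt : phat i j < phat (xhat j) j) :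
    ∃ k, (k, j) ∈ sgT phat xhat γ s ∧ phat k j ≤ phat i j := by
  let faster := (sgI phat xhat γ s).filter fun k => phat k j < phat (xhat j) j
  have hi_faster : i ∈ faster := Finset.mem_filter.2 ⟨hi, hlt⟩
  obtain ⟨k, hk, hk_min⟩ := faster.exists_min_image (phat · j) ⟨i, hi_faster⟩
  obtain ⟨hkI, hk_lt⟩ := Finset.mem_filter.1 hk
  refine ⟨k, mem_sgT.2 ⟨hj, hkI, hk_lt, fun l hl hl_lt => ?_⟩, hk_min i hi_faster⟩
  exact hk_min l (Finset.mem_filter.2 ⟨hl, hl_lt⟩)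

namespace SGStep

lemma J_subset (hstep : SGStep phat xhat γ s s') (i : Fin n) : s.J i ⊆ s'.J i := by
  obtain ⟨q, -, -, hJ, -⟩ := hstep
  rw [hJ]
  dsimp only
  split_ifs
  · exact Finset.subset_insert _ _
  · exact Finset.Subset.refl _

lemma sgI_subset (hphat : ∀ i j, 0 ≤ phat i j) (hstep : SGStep phat xhat γ s s') :
    sgI phat xhat γ s' ⊆ sgI phat xhat γ s := fun i hi =>
  mem_sgI.2 <| (Finset.sum_le_sum_of_subset_of_nonneg (hstep.J_subset i)
    fun j _ _ => hphat i j).trans_lt (mem_sgI.1 hi)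

lemma one_lt_r_of_one_lt_r (hstep : SGStep phat xhat γ s s') (hr : 1 < s'.r i j) :
    1 < s.r i j := by
  obtain ⟨q, -, -, -, hr'⟩ := hstep
  rw [hr'] at hr
  dsimp only at hr
  split_ifs at hr
  · exact absurd hr (lt_irrefl 1)
  · exact hr

lemma selected_of_mem_J_of_notMem_J (hstep : SGStep phat xhat γ s s')
    (hmem : j ∈ s'.J i) (hnotMem : j ∉ s.J i) :
    (i, j) ∈ sgT phat xhat γ s ∧
      IsMaxOn (fun q : Fin n × Fin m => phat (xhat q.2) q.2 / phat q.1 q.2)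
        (sgT phat xhat γ s) (i, j) ∧
      ∀ k, phat i j ≤ phat k j → s'.r k j = 1 := by
  obtain ⟨⟨i₀, j₀⟩, hT, hmax, hJ, hr⟩ := hstep
  obtain ⟨rfl, rfl⟩ : i = i₀ ∧ j = j₀ := by
    rw [hJ] at hmem
    dsimp only at hmem
    split_ifs at hmem with hi
    · exact ⟨hi, (Finset.mem_insert.1 hmem).resolve_right hnotMem⟩
    · exact absurd hmem hnotMem
  exact ⟨hT, hmax, fun k hk => by simp [hr, hk]⟩

end SGStep

/-- The states that the loop of `ScaledGreedy` can pass through, at termination or before; the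
choice among maximizing pairs is left open, so this is reachability along `SGStep`. -/
abbrev SGReachable (phat : Fin n → Fin m → ℝ) (xhat : Fin m → Fin n) (γ : ℝ)
    (s : SGState n m) : Prop :=
  Relation.ReflTransGen (SGStep phat xhat γ) (sgInit phat xhat) s

namespace SGReachable

lemma lt_of_one_lt_r (hphat : ∀ i j, 0 < phat i j) (hs : SGReachable phat xhat γ s)
    (hr : 1 < s.r i j) : phat i j < phat (xhat j) j := by
  induction hs with
  | refl =>
    have hratio : 1 < phat (xhat j) j / phat i j := by simpa [sgInit] using hr
    exact (one_lt_div (hphat i j)).1 hratio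
  | tail _ hstep ih => exact ih (hstep.one_lt_r_of_one_lt_r hr)

lemma notMem_sgAssigned_of_one_lt_r (hphat : ∀ i j, 0 < phat i j)
    (hs : SGReachable phat xhat γ s) (hi : i ∈ sgI phat xhat γ s) (hr : 1 < s.r i j) :
    j ∉ sgAssigned s := by
  induction hs with
  | refl => simp [mem_sgAssigned, sgInit]
  | @tail s s' hs hstep ih =>
    have hi_before : i ∈ sgI phat xhat γ s := hstep.sgI_subset (fun i j => (hphat i j).le) hi
    have hr_before : 1 < s.r i j := hstep.one_lt_r_of_one_lt_r hr
    have hj_before : j ∉ sgAssigned s := ih hi_before hr_before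
    intro hj
    obtain ⟨k, hk⟩ := mem_sgAssigned.1 hj
    obtain ⟨hT, -, hreset⟩ :=
      hstep.selected_of_mem_J_of_notMem_J hk fun h => hj_before (mem_sgAssigned.2 ⟨k, h⟩)
    obtain ⟨-, -, -, hk_min⟩ := mem_sgT.1 hT
    exact hr.ne' (hreset i (hk_min i hi_before (lt_of_one_lt_r hphat hs hr_before)))

lemma div_le_div_of_isMaxOn (hphat : ∀ i j, 0 < phat i j) (hs : SGReachable phat xhat γ s)
    (hi : i ∈ sgI phat xhat γ s)
    (hmax : IsMaxOn (fun q : Fin n × Fin m => phat (xhat q.2) q.2 / phat q.1 q.2)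
      (sgT phat xhat γ s) (i, j))
    (hr : 1 < s.r i j') :
    phat (xhat j') j' / phat i j' ≤ phat (xhat j) j / phat i j := by
  obtain ⟨k, hkT, hk_le⟩ := exists_mem_sgT_le (hs.notMem_sgAssigned_of_one_lt_r hphat hi hr) hi
    (hs.lt_of_one_lt_r hphat hr)
  calc phat (xhat j') j' / phat i j'
      ≤ phat (xhat j') j' / phat k j' :=
        div_le_div_of_nonneg_left (hphat _ _).le (hphat _ _) hk_le
    _ ≤ phat (xhat j) j / phat i j := hmax hkT

end SGReachable

theorem sg_decreasing_ratio_general (hphat : ∀ i j, 0 < phat i j)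
    (hs : SGReachable phat xhat γ s) (hj : j ∈ s.J i) (hr : 1 < s.r i j') :
    phat (xhat j') j' / phat i j' ≤ phat (xhat j) j / phat i j := by
  induction hs with
  | refl => simp [sgInit] at hj
  | @tail s s' hs hstep ih =>
    have hr_before : 1 < s.r i j' := hstep.one_lt_r_of_one_lt_r hr
    by_cases hj_before : j ∈ s.J i
    · exact ih hj_before hr_before
    · obtain ⟨hT, hmax, -⟩ := hstep.selected_of_mem_J_of_notMem_J hj hj_before
      exact SGReachable.div_le_div_of_isMaxOn hphat hs (mem_sgT.1 hT).2.1 hmax hr_before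

end ScaledGreedy

/-- At termination of `ScaledGreedy`, for any machine `i`, any job `j ∈ J_i`
and any job `j' ∉ J_i` with `r(i,j') > 1`, we have
`p̂(î_j,j)/p̂(i,j) ≥ p̂(î_{j'},j')/p̂(i,j')`. -/
theorem sg_decreasing_ratio [NeZero n]
    (phat : Fin n → Fin m → ℝ) (xhat : Fin m → Fin n) (γ : ℝ) (s : SGState n m)
    (hphat : ∀ i j, 0 < phat i j) (hγ : 0 < γ)
    (hfinal : SGFinal phat xhat γ s) (i : Fin n) (j j' : Fin m)
    (hj : j ∈ s.J i) (hj' : j' ∉ s.J i) (hr : 1 < s.r i j') :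
    phat (xhat j') j' / phat i j' ≤ phat (xhat j) j / phat i j :=
  sg_decreasing_ratio_general hphat hfinal.1 hj hr
end
end
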